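/- arXiv:math/0604376 — 3 statements merged into one kernel-verified Lean document; each statement's English description precedes it below -/
import Mathlib

section
/- Every Carmichael number less than 10^18 has at most 11 distinct prime factors. -/
/-- A Carmichael number: a composite natural number `N` such that
`b ^ (N - 1) ≡ 1 [MOD N]` for every `b` coprime to `N`. -/
def IsCarmichael (N : ℕ) : Prop :=
  1 < N ∧ ¬ N.Prime ∧ ∀ b : ℕ, Nat.Coprime b N → b ^ (N - 1) ≡ 1 [MOD N]

/-!
If `N` is a Carmichael number and `p ∣ N` is prime, then `N ≡ 1 [MOD p - 1]`, because `(ZMod p)ˣ`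
is cyclic of order `p - 1`.

Suppose that `N < B` satisfies these congruences, and choose some of its prime factors in increasing
order. With `P` the product of the chosen primes and `L` the least common multiple of the numbers
`p - 1`, we have `P ∣ N` and `N ≡ 1 [MOD L]`. Hence `P` and `L` are coprime, which rejects most
choices of the next prime, and `N` is determined modulo `P * L`. If `k` more primes, all at least
`c`, are to come, then also `P * c ^ k ≤ N`. As soon as `B ≤ P * L` there is at most one candidate
for `N`, which is discarded unless it lies between `P * c ^ k` and `B`. With twelve primes to choose
and `B = 10 ^ 18`, these constraints leave a search tree small enough to be traversed completely.
-/

theorem sub_one_dvd_of_forall_coprime_pow_modEq_one {n e p : ℕ} (hn : n ≠ 0) (hp : p.Prime)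
    (hpn : p ∣ n) (h : ∀ b : ℕ, b.Coprime n → b ^ e ≡ 1 [MOD n]) : p - 1 ∣ e := by
  have : Fact p.Prime := ⟨hp⟩
  have : NeZero n := ⟨hn⟩
  have units_pow (u : (ZMod n)ˣ) : u ^ e = 1 := by
    ext
    simpa using (ZMod.natCast_eq_natCast_iff _ _ _).2 (h _ (ZMod.val_coe_unit_coprime u))
  rw [← ZMod.card_units p, ← Nat.card_eq_fintype_card, ← IsCyclic.exponent_eq_card,
    Monoid.exponent_dvd_iff_forall_pow_eq_one]
  intro g
  obtain ⟨u, rfl⟩ := ZMod.unitsMap_surjective hpn g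
  rw [← map_pow, units_pow, map_one]

theorem IsCarmichael.modEq_one {N p : ℕ} (hN : IsCarmichael N) (hp : p ∈ N.primeFactors) :
    N ≡ 1 [MOD p - 1] := by
  obtain ⟨one_lt, -, fermat⟩ := hN
  have sub_one_dvd : p - 1 ∣ N - 1 :=
    sub_one_dvd_of_forall_coprime_pow_modEq_one (by lia) (Nat.prime_of_mem_primeFactors hp)
      (Nat.dvd_of_mem_primeFactors hp) fermat
  exact ((Nat.modEq_iff_dvd' one_lt.le).2 sub_one_dvd).symm

theorem coprime_of_dvd_of_modEq_one {N P L : ℕ} (hP : P ∣ N) (hL : N ≡ 1 [MOD L]) :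
    P.Coprime L :=
  Nat.Coprime.coprime_dvd_left hP (by simpa [Nat.Coprime] using hL.gcd_eq)

/-- A node of the search for numbers `N` with many prime factors `p`, all satisfying
`N ≡ 1 [MOD p - 1]`: some prime factors of `N` have been chosen, and a given number of larger ones
is still missing. -/
structure PartialFactorization where
  /-- The product of the primes chosen so far. -/
  prod : ℕ
  /-- The least common multiple of `p - 1` over the primes `p` chosen so far. -/
  modulus : ℕ
  /-- The number of primes still to be chosen. -/
  missing : ℕ
  /-- A lower bound for the primes still to be chosen. -/
  next : ℕ

namespace PartialFactorization

/-- The node at which `K` primes are to be chosen and none has been. -/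
def root (K : ℕ) : PartialFactorization := ⟨1, 1, K, 2⟩

/-- The child of a node at which `next` is not chosen. -/
def skip (v : PartialFactorization) : PartialFactorization := { v with next := v.next + 1 }

/-- The child of a node at which `next` is chosen. -/
def take (v : PartialFactorization) : PartialFactorization :=
  ⟨v.prod * v.next, v.modulus.lcm (v.next - 1), v.missing - 1, v.next + 1⟩

/-- The lower bound for the numbers a node admits. -/
def lowerBound (v : PartialFactorization) : ℕ := v.prod * v.next ^ v.missing

/-- `v.Admits N` says that `N` is compatible with the choices made at `v`. The chosen and the
missing primes need not be all the prime factors of `N`. -/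
structure Admits (v : PartialFactorization) (N : ℕ) : Prop where
  ne_zero : N ≠ 0
  modEq_one : N ≡ 1 [MOD v.modulus]
  exists_primes : ∃ s : Finset ℕ, s.card = v.missing ∧ (∀ p ∈ s, p.Prime ∧ v.next ≤ p) ∧
    v.prod * ∏ p ∈ s, p ∣ N

/-- A sufficient test for a node to admit no number below `B`: its lower bound is too large, its
product and modulus are not coprime, or their product is at least `B` and the smallest number with
the right residues, given by the Chinese remainder theorem, is out of range. -/
def isClosed (B : ℕ) (v : PartialFactorization) : Bool :=
  decide (B ≤ v.lowerBound) ||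
    if h : v.prod.Coprime v.modulus then
      let r : ℕ := Nat.chineseRemainder h 0 1
      decide (B ≤ v.prod * v.modulus ∧ (r < v.lowerBound ∨ B ≤ r))
    else true

/-- Whether every branch below a node is closed within `depth` levels. Choosing `next` is
considered if `next` passes a sieve by `2`, `3` and `5`, a test that the kernel evaluates faster
than primality; composite choices only enlarge the tree. -/
def isExhausted (B : ℕ) : ℕ → PartialFactorization → Bool
  | 0, _ => false
  | depth + 1, v => v.isClosed B ||
      (isExhausted B depth v.skip &&
        (!decide (v.next.Coprime 30 ∨ v.next ∣ 30) || isExhausted B depth v.take))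

variable {v : PartialFactorization} {B N : ℕ}

theorem admits_root (hN : N ≠ 0) {K : ℕ} (hK : K ≤ N.primeFactors.card) : (root K).Admits N := by
  obtain ⟨s, hs, card_s⟩ := Finset.exists_subset_card_eq hK
  refine ⟨hN, Nat.modEq_one, s, card_s, fun p hp ↦ ?_, ?_⟩
  · have prime_p := Nat.prime_of_mem_primeFactors (hs hp)
    exact ⟨prime_p, prime_p.two_le⟩
  · rw [root, one_mul]
    exact (Finset.prod_dvd_prod_of_subset _ _ _ hs).trans (Nat.prod_primeFactors_dvd N)

namespace Admits

theorem prod_dvd (h : v.Admits N) : v.prod ∣ N :=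
  have ⟨_, _, _, dvd⟩ := h.exists_primes
  (dvd_mul_right _ _).trans dvd

theorem lowerBound_le (h : v.Admits N) : v.lowerBound ≤ N := by
  obtain ⟨s, card_s, hs, dvd⟩ := h.exists_primes
  calc v.prod * v.next ^ v.missing
      ≤ v.prod * ∏ p ∈ s, p := by
        rw [← card_s]
        exact Nat.mul_le_mul_left _ (Finset.pow_card_le_prod _ _ _ fun p hp ↦ (hs p hp).2)
    _ ≤ N := Nat.le_of_dvd (Nat.pos_of_ne_zero h.ne_zero) dvd

theorem modEq_chineseRemainder (h : v.Admits N) (co : v.prod.Coprime v.modulus) :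
    N ≡ Nat.chineseRemainder co 0 1 [MOD v.prod * v.modulus] :=
  Nat.chineseRemainder_modEq_unique co (Nat.modEq_zero_iff_dvd.2 h.prod_dvd) h.modEq_one

theorem le_of_isClosed (h : v.Admits N) (closed : v.isClosed B = true) : B ≤ N := by
  have co : v.prod.Coprime v.modulus := coprime_of_dvd_of_modEq_one h.prod_dvd h.modEq_one
  simp only [isClosed, dif_pos co, Bool.or_eq_true, decide_eq_true_eq] at closed
  rcases closed with B_le | ⟨B_le, out_of_range⟩
  · exact B_le.trans h.lowerBound_le
  · by_contra! N_lt
    have N_lt_mul : N < v.prod * v.modulus := N_lt.trans_le B_le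
    have mul_ne_zero : v.prod * v.modulus ≠ 0 := Nat.ne_zero_of_lt N_lt_mul
    have N_eq : N = Nat.chineseRemainder co 0 1 :=
      (h.modEq_chineseRemainder co).eq_of_lt_of_lt N_lt_mul (Nat.chineseRemainder_lt_mul co 0 1
        (left_ne_zero_of_mul mul_ne_zero) (right_ne_zero_of_mul mul_ne_zero))
    rw [← N_eq] at out_of_range
    exact out_of_range.elim h.lowerBound_le.not_gt N_lt.not_ge

theorem skip_or_take (h : v.Admits N) (hN : ∀ p ∈ N.primeFactors, N ≡ 1 [MOD p - 1]) :
    v.skip.Admits N ∨ v.next.Prime ∧ v.take.Admits N := by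
  obtain ⟨s, card_s, hs, dvd⟩ := h.exists_primes
  by_cases mem : v.next ∈ s
  · have prime_next : v.next.Prime := (hs _ mem).1
    have next_dvd : v.next ∣ N :=
      ((Finset.dvd_prod_of_mem _ mem).trans (dvd_mul_left _ _)).trans dvd
    have modEq_one : N ≡ 1 [MOD v.next - 1] :=
      hN _ (Nat.mem_primeFactors.2 ⟨prime_next, next_dvd, h.ne_zero⟩)
    refine .inr ⟨prime_next, h.ne_zero, Nat.mod_lcm h.modEq_one modEq_one, s.erase v.next, ?_,
      fun p hp ↦ ?_, ?_⟩
    · rw [Finset.card_erase_of_mem mem, card_s, take]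
    · obtain ⟨p_ne, p_mem⟩ := Finset.mem_erase.1 hp
      exact ⟨(hs p p_mem).1, (hs p p_mem).2.lt_of_ne' p_ne⟩
    · rwa [take, mul_assoc, Finset.mul_prod_erase s (fun p ↦ p) mem]
  · refine .inl ⟨h.ne_zero, h.modEq_one, s, card_s, fun p hp ↦ ⟨(hs p hp).1, ?_⟩, dvd⟩
    exact (hs p hp).2.lt_of_ne' (ne_of_mem_of_not_mem hp mem)

theorem le_of_isExhausted (hN : ∀ p ∈ N.primeFactors, N ≡ 1 [MOD p - 1]) {depth : ℕ}
    (h : v.Admits N) (exhausted : isExhausted B depth v = true) : B ≤ N := by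
  induction depth generalizing v with
  | zero => simp [isExhausted] at exhausted
  | succ depth ih =>
    simp only [isExhausted, Bool.or_eq_true, Bool.and_eq_true, Bool.not_eq_true',
      decide_eq_false_iff_not] at exhausted
    rcases exhausted with closed | ⟨skip_exhausted, take_exhausted⟩
    · exact h.le_of_isClosed closed
    · rcases h.skip_or_take hN with skip | ⟨prime_next, take⟩
      · exact ih skip skip_exhausted
      · exact ih take (take_exhausted.resolve_left
          (not_not_intro (Nat.coprime_or_dvd_of_prime prime_next 30)))

end Admits

-- In this tree `next` never exceeds `242`, which gives the depth.
theorem isExhausted_ten_pow_eighteen_root_twelve : isExhausted (10 ^ 18) 241 (root 12) = true := by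
  decide +kernel

end PartialFactorization

theorem carmichael_lt_1e18_omega_le_eleven_general {N : ℕ}
    (hN : ∀ p ∈ N.primeFactors, N ≡ 1 [MOD p - 1]) (lt : N < 10 ^ 18) :
    N.primeFactors.card ≤ 11 := by
  by_contra! twelve_le
  have ne_zero : N ≠ 0 := by
    rintro rfl
    simp at twelve_le
  have admits := PartialFactorization.admits_root ne_zero twelve_le
  exact lt.not_ge <| admits.le_of_isExhausted hN
    PartialFactorization.isExhausted_ten_pow_eighteen_root_twelve

theorem carmichael_lt_1e18_omega_le_eleven :
    ∀ N : ℕ, IsCarmichael N → N < 10 ^ 18 → N.primeFactors.card ≤ 11 :=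
  fun _ hN lt ↦ carmichael_lt_1e18_omega_le_eleven_general (fun _ ↦ hN.modEq_one) lt
end

section
/- There are exactly 49 Carmichael numbers less than 10^18 having exactly 11 distinct prime factors. -/
/-!
By Korselt's criterion a Carmichael number `N` is squarefree and `p - 1 ∣ N - 1` for all primes
`p ∣ N`.  Write `N = P * R`, where `P` is the product of the smallest prime factors of `N`, and let
`L` be the least common multiple of `2` and the numbers `p - 1` for the primes `p ∣ P`.  Then
`P * R ≡ 1` modulo `L`, so `R < 10 ^ 18 / P` lies in a known residue class modulo `L`.  Once `P * L`
is comparable to `10 ^ 18`, only few values of `R` are left, and each is tested for being a product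
of primes `p` with `p - 1 ∣ N - 1`.  This keeps an exhaustive search over the prefixes `P` small
enough for the kernel.  The search is written with recursors and the functions `Nat.mul`,
`Nat.mod`, ..., which the kernel evaluates much faster than the overloaded operations.
-/

open ArithmeticFunction (carmichael carmichael_dvd carmichael_eq_exponent)

theorem carmichael_of_prime {p : ℕ} (hp : p.Prime) : carmichael p = p - 1 := by
  rcases eq_or_ne p 2 with rfl | hp2
  · simpa using ArithmeticFunction.carmichael_two_pow_of_le_two (n := 1) (by norm_num)
  · simpa [Nat.totient_prime hp] using
      ArithmeticFunction.carmichael_pow_of_prime_ne_two 1 hp hp2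

theorem dvd_carmichael_sq {p : ℕ} (hp : p.Prime) : p ∣ carmichael (p ^ 2) := by
  rcases eq_or_ne p 2 with rfl | hp2
  · rw [ArithmeticFunction.carmichael_two_pow_of_le_two le_rfl, Nat.add_one_sub_one, pow_one]
  · rw [ArithmeticFunction.carmichael_pow_of_prime_ne_two 2 hp hp2,
      Nat.totient_prime_pow hp two_pos]
    exact dvd_mul_of_dvd_left (dvd_pow_self p (by norm_num)) _

theorem carmichael_dvd_iff_of_squarefree {n m : ℕ} (hn : Squarefree n) :
    carmichael n ∣ m ↔ ∀ p, p.Prime → p ∣ n → p - 1 ∣ m := by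
  have hcop : Set.Pairwise n.primeFactors (Function.onFun Nat.Coprime id) := fun p hp q hq hpq =>
    (Nat.coprime_primes (Nat.prime_of_mem_primeFactors hp) (Nat.prime_of_mem_primeFactors hq)).2 hpq
  have hprod : ∏ p ∈ n.primeFactors, id p = n := Nat.prod_primeFactors_of_squarefree hn
  rw [← hprod, ArithmeticFunction.carmichael_finsetProd hcop, hprod, Finset.lcm_dvd_iff]
  refine forall_congr' fun p => ⟨fun h hp hpn => ?_, fun h hp => ?_⟩
  · rw [← carmichael_of_prime hp]
    exact h (Nat.mem_primeFactors.2 ⟨hp, hpn, hn.ne_zero⟩)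
  · have hp' := Nat.prime_of_mem_primeFactors hp
    rw [Function.comp_apply, id, carmichael_of_prime hp']
    exact h hp' (Nat.dvd_of_mem_primeFactors hp)

theorem forall_coprime_pow_modEq_one_iff {n m : ℕ} (hn : n ≠ 0) :
    (∀ b : ℕ, b.Coprime n → b ^ m ≡ 1 [MOD n]) ↔ carmichael n ∣ m := by
  have : NeZero n := ⟨hn⟩
  rw [carmichael_eq_exponent hn, Monoid.exponent_dvd_iff_forall_pow_eq_one]
  refine ⟨fun h u => ?_, fun h b hb => ?_⟩
  · have hu := (ZMod.natCast_eq_natCast_iff _ _ _).2 (h _ (ZMod.val_coe_unit_coprime u))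
    ext
    simpa using hu
  · have hu := congrArg Units.val (h (ZMod.unitOfCoprime b hb))
    rw [← ZMod.natCast_eq_natCast_iff]
    simpa using hu

theorem isCarmichael_iff_carmichael_dvd {N : ℕ} :
    IsCarmichael N ↔ 1 < N ∧ ¬ N.Prime ∧ carmichael N ∣ N - 1 :=
  and_congr_right fun h => and_congr_right fun _ => forall_coprime_pow_modEq_one_iff (by lia)

namespace IsCarmichael

variable {N p : ℕ}

theorem squarefree (hN : IsCarmichael N) : Squarefree N := by
  obtain ⟨hN1, -, hdvd⟩ := isCarmichael_iff_carmichael_dvd.1 hN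
  refine Nat.squarefree_iff_prime_squarefree.2 fun p hp hpp => hp.one_lt.ne' ?_
  have h1 : p ∣ N - 1 :=
    (dvd_carmichael_sq hp).trans ((carmichael_dvd (sq p ▸ hpp)).trans hdvd)
  exact Nat.dvd_one.1 ((Nat.dvd_sub_iff_right hN1.le (dvd_of_mul_left_dvd hpp)).1 h1)

theorem sub_one_dvd (hN : IsCarmichael N) (hp : p.Prime) (hpN : p ∣ N) : p - 1 ∣ N - 1 :=
  (carmichael_dvd_iff_of_squarefree hN.squarefree).1
    (isCarmichael_iff_carmichael_dvd.1 hN).2.2 p hp hpN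

theorem odd (hN : IsCarmichael N) : Odd N := by
  have hN1 : 1 < N := hN.1
  have : Fact (2 < N) := ⟨lt_of_le_of_ne hN1 fun h => hN.2.1 (h ▸ Nat.prime_two)⟩
  by_contra hodd
  have hpow := (ZMod.natCast_eq_natCast_iff _ _ _).2
    (hN.2.2 (N - 1) ((Nat.coprime_self_sub_left hN1.le).2 (Nat.coprime_one_left N)))
  have hodd' : Odd (N - 1) := Nat.Even.sub_odd hN1.le (Nat.not_odd_iff_even.1 hodd) odd_one
  rw [Nat.cast_pow, Nat.cast_pred (by lia), ZMod.natCast_self, zero_sub, hodd'.neg_one_pow,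
    Nat.cast_one] at hpow
  exact ZMod.neg_one_ne_one hpow

end IsCarmichael

theorem isCarmichael_iff_korselt {N : ℕ} : IsCarmichael N ↔
    1 < N ∧ ¬ N.Prime ∧ Squarefree N ∧ ∀ p, p.Prime → p ∣ N → p - 1 ∣ N - 1 := by
  refine ⟨fun hN => ⟨hN.1, hN.2.1, hN.squarefree, fun p => hN.sub_one_dvd⟩, ?_⟩
  rintro ⟨h1, hnp, hsq, hdvd⟩
  exact isCarmichael_iff_carmichael_dvd.2 ⟨h1, hnp, (carmichael_dvd_iff_of_squarefree hsq).2 hdvd⟩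

theorem pow_card_primeFactors_le {n q : ℕ} (hn : n ≠ 0) (hq : ∀ p, p.Prime → p ∣ n → q ≤ p) :
    q ^ n.primeFactors.card ≤ n :=
  calc q ^ n.primeFactors.card
    _ ≤ ∏ p ∈ n.primeFactors, p := Finset.pow_card_le_prod _ _ _ fun p hp =>
        hq p (Nat.prime_of_mem_primeFactors hp) (Nat.dvd_of_mem_primeFactors hp)
    _ ≤ n := Nat.le_of_dvd (Nat.pos_of_ne_zero hn) (Nat.prod_primeFactors_dvd n)

theorem prime_of_squarefree_of_card_primeFactors_eq_one {n : ℕ} (hn : Squarefree n)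
    (hcard : n.primeFactors.card = 1) : n.Prime := by
  obtain ⟨p, hp⟩ := Finset.card_eq_one.1 hcard
  have hpn : p = n := by
    rw [← Nat.prod_primeFactors_of_squarefree hn, hp, Finset.prod_singleton]
  exact hpn ▸ Nat.prime_of_mem_primeFactors (hp ▸ Finset.mem_singleton_self p)

theorem card_primeFactors_prime_mul {q n : ℕ} (hq : q.Prime) (hqn : q.Coprime n) :
    (q * n).primeFactors.card = n.primeFactors.card + 1 := by
  rw [hqn.primeFactors_mul, Finset.card_union_of_disjoint hqn.disjoint_primeFactors,
    hq.primeFactors, Finset.card_singleton, add_comm]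

theorem primeFactors_list_prod {f : List ℕ} (hf : ∀ p ∈ f, p.Prime) :
    f.prod.primeFactors = f.toFinset :=
  (List.toFinset_eq_of_perm _ _ (Nat.primeFactorsList_unique rfl hf)).symm

theorem squarefree_list_prod {f : List ℕ} (hf : ∀ p ∈ f, p.Prime) (hnd : f.Nodup) :
    Squarefree f.prod :=
  (Nat.squarefree_iff_nodup_primeFactorsList
    (List.prod_ne_zero fun h => Nat.not_prime_zero (hf 0 h))).2
      ((Nat.primeFactorsList_unique rfl hf).nodup_iff.1 hnd)

theorem isCarmichael_list_prod {f : List ℕ} (hf : ∀ p ∈ f, p.Prime) (hnd : f.Nodup)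
    (hlen : 2 ≤ f.length) (hdvd : ∀ p ∈ f, p - 1 ∣ f.prod - 1) : IsCarmichael f.prod := by
  have hcard : f.prod.primeFactors.card = f.length := by
    rw [primeFactors_list_prod hf, List.toFinset_card_of_nodup hnd]
  have hsq := squarefree_list_prod hf hnd
  refine isCarmichael_iff_korselt.2 ⟨?_, fun hp => ?_, hsq, fun p hp hpf => hdvd p ?_⟩
  · by_contra! h
    have : f.prod.primeFactors = ∅ := Nat.primeFactors_eq_empty.2 (by lia)
    rw [this, Finset.card_empty] at hcard
    lia
  · rw [hp.primeFactors, Finset.card_singleton] at hcard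
    lia
  · rw [← List.mem_toFinset, ← primeFactors_list_prod hf]
    exact Nat.mem_primeFactors.2 ⟨hp, hpf, hsq.ne_zero⟩

/-- `PrimesCover l n` says that `l` is an increasing list of primes and that a prime factor of `n`
missing from `l` is larger than all entries of `l`. -/
structure PrimesCover (l : List ℕ) (n : ℕ) : Prop where
  sorted : l.Pairwise (· < ·)
  prime_of_mem : ∀ q ∈ l, q.Prime
  mem_or_lt : ∀ p, p.Prime → p ∣ n → p ∈ l ∨ ∀ q ∈ l, q < p

namespace PrimesCover

variable {q m n : ℕ} {l : List ℕ}

theorem head_prime (h : PrimesCover (q :: l) n) : q.Prime :=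
  h.prime_of_mem q List.mem_cons_self

theorem head_le (h : PrimesCover (q :: l) n) {p : ℕ} (hp : p.Prime) (hpn : p ∣ n) : q ≤ p := by
  rcases h.mem_or_lt p hp hpn with hmem | hlt
  · rcases List.mem_cons.1 hmem with rfl | hmem
    · exact le_rfl
    · exact (List.rel_of_pairwise_cons h.sorted hmem).le
  · exact (hlt q List.mem_cons_self).le

theorem tail_of_dvd (h : PrimesCover (q :: l) n) (hmn : m ∣ n) (hqm : ¬ q ∣ m) :
    PrimesCover l m where
  sorted := h.sorted.of_cons
  prime_of_mem p hp := h.prime_of_mem p (List.mem_cons_of_mem q hp)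
  mem_or_lt p hp hpm := by
    refine (h.mem_or_lt p hp (hpm.trans hmn)).imp (fun hmem => ?_) fun hlt r hr =>
      hlt r (List.mem_cons_of_mem q hr)
    exact (List.mem_cons.1 hmem).resolve_left fun hpq => hqm (hpq ▸ hpm)

theorem tail_of_coprime (h : PrimesCover (q :: l) (q * n)) (hqn : q.Coprime n) :
    PrimesCover l n :=
  h.tail_of_dvd (dvd_mul_left n q) (h.head_prime.coprime_iff_not_dvd.1 hqn)

end PrimesCover

theorem coprime_of_dvd_of_dvd_sub_one {a b n : ℕ} (hn : 1 ≤ n) (ha : a ∣ n) (hb : b ∣ n - 1) :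
    a.Coprime b :=
  ((Nat.coprime_self_sub_right hn).2 (Nat.coprime_one_right n)).of_dvd ha hb

theorem exists_eq_add_mul_of_mul_modEq_one {s L P B R : ℕ} (hP : P ≠ 0) (hs : s < L)
    (hPs : P * s ≡ 1 [MOD L]) (hPR : P * R ≡ 1 [MOD L]) (hPRB : P * R ≤ B) :
    ∃ j < (B / P + L - s) / L, R = s + L * j := by
  have hPL : P.Coprime L := Nat.coprime_of_mul_modEq_one R hPR
  have hRs : R % L = s := by
    rw [← Nat.mod_eq_of_lt hs]
    exact Nat.ModEq.cancel_left_of_coprime hPL.symm (hPR.trans hPs.symm)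
  have hR : s + L * (R / L) = R := hRs ▸ Nat.mod_add_div R L
  have hRB : R ≤ B / P := (Nat.le_div_iff_mul_le (Nat.pos_of_ne_zero hP)).2 (by lia)
  exact ⟨R / L, (Nat.le_div_iff_mul_le (by lia)).2 (by lia), hR.symm⟩

/-! ### Modular inverses for kernel evaluation -/

/-- `force n f` is `f n`, evaluated call-by-value: the recursor makes the kernel reduce `n` to a
literal before substituting it into `f`. -/
noncomputable def force {α : Type*} (n : ℕ) (f : ℕ → α) : α :=
  n.rec (f 0) fun m _ => f m.succ

@[simp]
theorem force_eq {α : Type*} (n : ℕ) (f : ℕ → α) : force n f = f n := by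
  cases n <;> rfl

/-- Bounded universal quantification over `j < n` as a Boolean. -/
noncomputable def forallBelow (n : ℕ) (p : ℕ → Bool) : Bool :=
  n.rec true fun j ih => p j && ih

theorem forallBelow_eq_true {n : ℕ} {p : ℕ → Bool} :
    forallBelow n p = true ↔ ∀ j < n, p j = true := by
  induction n with
  | zero => simp [forallBelow]
  | succ n ih =>
    change (p n && forallBelow n p) = true ↔ _
    rw [Bool.and_eq_true, ih, Nat.forall_lt_succ_right, and_comm]

/-- The inverse of `a` modulo `m`, by at most `fuel` steps of Euclid's algorithm: if `y` inverts
`m % a` modulo `a`, then `(m * (a - y) + 1) / a` inverts `a` modulo `m`. -/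
noncomputable def invModAux (fuel : ℕ) : ℕ → ℕ → ℕ :=
  fuel.rec (fun _ _ => 1) fun _ ih a m =>
    (m.mod a).rec 1 fun r _ => ((m.mul (a.sub (ih r.succ a))).succ).div a

theorem invModAux_succ (fuel a m : ℕ) : invModAux (fuel + 1) a m =
    if m % a = 0 then 1 else (m * (a - invModAux fuel (m % a) a) + 1) / a := by
  change @Nat.rec (fun _ => ℕ) 1
    (fun r _ => (m * (a - invModAux fuel (r + 1) a) + 1) / a) (m % a) = _
  cases m % a <;> rfl

theorem invModAux_spec {fuel a m : ℕ} (hfuel : a ≤ fuel) (ha : 0 < a) (hm : 0 < m)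
    (ham : a.Coprime m) : invModAux fuel a m ≤ m ∧ a * invModAux fuel a m ≡ 1 [MOD m] := by
  induction fuel generalizing a m with
  | zero => lia
  | succ fuel ih =>
    rw [invModAux_succ]
    split_ifs with hr
    · have ha1 : a = 1 := Nat.eq_one_of_dvd_coprimes ham dvd_rfl (Nat.dvd_of_mod_eq_zero hr)
      exact ⟨hm, by rw [ha1]⟩
    · have hra : m % a < a := Nat.mod_lt m ha
      obtain ⟨hle, hinv⟩ := ih (by lia) (Nat.pos_of_ne_zero hr) ha
        ((Nat.mod_modEq m a).gcd_eq.trans ham.symm)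
      set y := invModAux fuel (m % a) a
      have hdvd : a ∣ m * (a - y) + 1 := by
        have hmy : (m : ℤ) * y ≡ 1 [ZMOD a] := by
          exact_mod_cast ((Nat.mod_modEq m a).symm.mul_right y).trans hinv
        zify [hle]
        have : (m : ℤ) * (a - y) + 1 = a * m - (m * y - 1) := by ring
        rw [this]
        exact dvd_sub (dvd_mul_right _ _) hmy.symm.dvd
      have ha2 : 1 < a := by lia
      refine ⟨Nat.lt_succ_iff.1 (Nat.div_lt_of_lt_mul ?_), ?_⟩
      · have := Nat.mul_le_mul_left m (Nat.sub_le a y)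
        lia
      · rw [Nat.mul_div_cancel' hdvd]
        exact (Nat.modEq_zero_iff_dvd.2 (dvd_mul_right m (a - y))).add_right 1

/-- The inverse of `a` modulo `m`. -/
noncomputable def invMod (a m : ℕ) : ℕ :=
  force (a.mod m) fun r => invModAux r r m

theorem invMod_spec {a m : ℕ} (hm : 1 < m) (ham : a.Coprime m) :
    invMod a m < m ∧ a * invMod a m ≡ 1 [MOD m] := by
  have hcop : (a % m).Coprime m := (Nat.mod_modEq a m).gcd_eq.trans ham
  have hpos : 0 < a % m := Nat.pos_of_ne_zero fun h => by
    rw [h, Nat.coprime_zero_left] at hcop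
    exact hm.ne' hcop
  obtain ⟨hle, hmod⟩ := invModAux_spec le_rfl hpos hm.pos hcop
  have hinv : a * invMod a m ≡ 1 [MOD m] := by
    rw [invMod, force_eq]
    exact ((Nat.mod_modEq a m).symm.mul_right _).trans hmod
  refine ⟨lt_of_le_of_ne (by rwa [invMod, force_eq]) fun h => ?_, hinv⟩
  rw [h] at hinv
  exact hm.ne' (Nat.dvd_one.1 ((hinv.dvd_iff dvd_rfl).1 (dvd_mul_left m a)))

/-! ### The search -/

/-- The odd primes below `1430`, a bound large enough for the search below never to run out of
primes, which would make it fail. -/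
def smallPrimes : List ℕ := [
  3, 5, 7, 11, 13, 17, 19, 23, 29, 31, 37, 41, 43, 47, 53, 59, 61, 67, 71, 73, 79, 83, 89, 97,
  101, 103, 107, 109, 113, 127, 131, 137, 139, 149, 151, 157, 163, 167, 173, 179, 181, 191, 193,
  197, 199, 211, 223, 227, 229, 233, 239, 241, 251, 257, 263, 269, 271, 277, 281, 283, 293, 307,
  311, 313, 317, 331, 337, 347, 349, 353, 359, 367, 373, 379, 383, 389, 397, 401, 409, 419, 421,
  431, 433, 439, 443, 449, 457, 461, 463, 467, 479, 487, 491, 499, 503, 509, 521, 523, 541, 547,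
  557, 563, 569, 571, 577, 587, 593, 599, 601, 607, 613, 617, 619, 631, 641, 643, 647, 653, 659,
  661, 673, 677, 683, 691, 701, 709, 719, 727, 733, 739, 743, 751, 757, 761, 769, 773, 787, 797,
  809, 811, 821, 823, 827, 829, 839, 853, 857, 859, 863, 877, 881, 883, 887, 907, 911, 919, 929,
  937, 941, 947, 953, 967, 971, 977, 983, 991, 997, 1009, 1013, 1019, 1021, 1031, 1033, 1039,
  1049, 1051, 1061, 1063, 1069, 1087, 1091, 1093, 1097, 1103, 1109, 1117, 1123, 1129, 1151,
  1153, 1163, 1171, 1181, 1187, 1193, 1201, 1213, 1217, 1223, 1229, 1231, 1237, 1249, 1259,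
  1277, 1279, 1283, 1289, 1291, 1297, 1301, 1303, 1307, 1319, 1321, 1327, 1361, 1367, 1373,
  1381, 1399, 1409, 1423, 1427, 1429]

theorem prime_iff_forall_mem_range {n m : ℕ} (hnm : n < m * m) :
    n.Prime ↔ 2 ≤ n ∧ ∀ d ∈ List.range m, 2 ≤ d → d * d ≤ n → ¬ d ∣ n := by
  rw [Nat.prime_def_le_sqrt]
  refine and_congr_right fun _ => forall_congr' fun d => ?_
  rw [Nat.le_sqrt, List.mem_range]
  refine ⟨fun h _ => h, fun h hd hdn => h ?_ hd hdn⟩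
  exact Nat.mul_self_lt_mul_self_iff.1 (hdn.trans_lt hnm)

theorem smallPrimes_eq_filter : smallPrimes = (List.range 1430).filter fun n =>
    3 ≤ n ∧ ∀ d ∈ List.range 38, 2 ≤ d → d * d ≤ n → ¬ d ∣ n := by
  decide +kernel

theorem mem_smallPrimes {p : ℕ} : p ∈ smallPrimes ↔ p.Prime ∧ p ≠ 2 ∧ p < 1430 := by
  rw [smallPrimes_eq_filter, List.mem_filter, List.mem_range, decide_eq_true_iff, and_comm,
    ← and_assoc]
  refine and_congr_left fun hp => ?_
  rw [prime_iff_forall_mem_range (show p < 38 * 38 by lia), and_right_comm]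
  exact and_congr_left fun _ => by lia

theorem primesCover_smallPrimes {n : ℕ} (hn : Odd n) : PrimesCover smallPrimes n where
  sorted := by
    rw [smallPrimes_eq_filter]
    exact List.pairwise_lt_range.filter _
  prime_of_mem q hq := (mem_smallPrimes.1 hq).1
  mem_or_lt p hp hpn := by
    have hp2 : p ≠ 2 := fun h => Nat.not_even_iff_odd.2 hn (even_iff_two_dvd.2 (h ▸ hpn))
    rcases lt_or_ge p 1430 with hlt | hge
    · exact Or.inl (mem_smallPrimes.2 ⟨hp, hp2, hlt⟩)
    · exact Or.inr fun q hq => (mem_smallPrimes.1 hq).2.2.trans_le hge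

/-- Certifies that a Carmichael number `N` lies in `T`, where `R ∣ N` has `k` prime factors and `l`
covers the primes of `R`.  The primes of `l` are divided out of `R` until `R` is prime. -/
noncomputable def checkCofactor (T : List ℕ) (N : ℕ) (l : List ℕ) : ℕ → ℕ → Bool :=
  l.rec (fun _ _ => false) fun q _ ih k R =>
    bif R.blt (q.pow k) then true
    else bif k.ble 1 then
      !((N.sub 1).mod (R.sub 1)).beq 0 || T.any N.beq ||
        smallPrimes.any fun p => p.blt R && (R.mod p).beq 0
    else bif (R.mod q).beq 0 then
      !((N.sub 1).mod (q.sub 1)).beq 0 || force (R.div q) fun R => ih (k.sub 1) R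
    else ih k R

/-- Certifies that all Carmichael numbers `P * R < B` lie in `T`, where `L ∣ P * R - 1`, and `R` has
`k` prime factors, covered by `l`.  Such an `R` runs through the residue class of the inverse of `P`
modulo `L`. -/
noncomputable def checkProgression (B : ℕ) (T l : List ℕ) (k P L : ℕ) : Bool :=
  force (invMod P L) fun s =>
    forallBelow ((((B.div P).add L).sub s).div L) fun j =>
      force (s.add (L.mul j)) fun R => checkCofactor T (P.mul R) l k R

/-- Certifies the same as `checkProgression`.  The primes `q` in `l` are adjoined to `P` one by one;
a branch is left to `checkProgression` once only few values of `R` remain. -/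
noncomputable def checkPrefix (B : ℕ) (T l : List ℕ) : ℕ → ℕ → ℕ → Bool :=
  l.rec (fun _ _ _ => false) fun q l ih k P L =>
    bif B.ble (P.mul (q.pow k)) then true
    else bif (P.gcd (q.sub 1)).beq 1 then
      (force (P.mul q) fun P => force (L.lcm (q.sub 1)) fun L =>
        bif k.ble 2 || B.ble (Nat.mul 8 (P.mul L)) then checkProgression B T l (k.sub 1) P L
        else ih (k.sub 1) P L) &&
      ih k P L
    else ih k P L

section Soundness

variable {B k L N P R q : ℕ} {T l : List ℕ}

theorem mod_beq_zero (m n : ℕ) : (m.mod n).beq 0 = decide (n ∣ m) := by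
  rw [Bool.eq_iff_iff, Nat.beq_eq, decide_eq_true_iff, Nat.dvd_iff_mod_eq_zero]
  rfl

theorem checkCofactor_cons : checkCofactor T N (q :: l) k R = true ↔
    (q ^ k ≤ R →
      if k ≤ 1 then R - 1 ∣ N - 1 → N ∈ T ∨ ∃ p ∈ smallPrimes, p < R ∧ p ∣ R
      else if q ∣ R then q - 1 ∣ N - 1 → checkCofactor T N l (k - 1) (R / q) = true
      else checkCofactor T N l k R = true) := by
  simp only [checkCofactor, force_eq, cond_eq_ite, mod_beq_zero, Nat.blt_eq, Nat.ble_eq,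
    Nat.sub_eq, Nat.pow_eq, decide_eq_true_eq, ← not_lt]
  split_ifs <;> simp_all [imp_iff_not_or, or_assoc]
  rfl

theorem checkProgression_iff : checkProgression B T l k P L = true ↔
    ∀ j < (B / P + L - invMod P L) / L,
      checkCofactor T (P * (invMod P L + L * j)) l k (invMod P L + L * j) = true := by
  simp only [checkProgression, force_eq, forallBelow_eq_true]
  rfl

theorem checkPrefix_cons : checkPrefix B T (q :: l) k P L = true ↔
    (P * q ^ k < B →
      (P.Coprime (q - 1) →
        if k ≤ 2 ∨ B ≤ 8 * (P * q * L.lcm (q - 1)) then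
          checkProgression B T l (k - 1) (P * q) (L.lcm (q - 1)) = true
        else checkPrefix B T l (k - 1) (P * q) (L.lcm (q - 1)) = true) ∧
      checkPrefix B T l k P L = true) := by
  simp only [checkPrefix, force_eq, cond_eq_ite, Nat.ble_eq, Nat.beq_eq, Bool.or_eq_true,
    Nat.mul_eq, Nat.sub_eq, Nat.pow_eq, ← Nat.coprime_iff_gcd_eq_one, ← not_le]
  split_ifs <;> grind

theorem mem_of_checkCofactor (hN : IsCarmichael N) (hl : PrimesCover l R) (hRN : R ∣ N)
    (hR : R.primeFactors.card = k) (hk : k ≠ 0) (h : checkCofactor T N l k R = true) : N ∈ T := by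
  induction l generalizing k R with
  | nil => exact absurd h Bool.false_ne_true
  | cons q l ih =>
    have hsq : Squarefree R := hN.squarefree.squarefree_of_dvd hRN
    have hpow : q ^ k ≤ R := hR ▸ pow_card_primeFactors_le hsq.ne_zero fun p => hl.head_le
    replace h := checkCofactor_cons.1 h hpow
    split_ifs at h with hk1 hqR
    · have hRprime : R.Prime :=
        prime_of_squarefree_of_card_primeFactors_eq_one hsq (by lia)
      refine (h (hN.sub_one_dvd hRprime hRN)).resolve_right fun ⟨p, hp, hpR, hdvd⟩ => ?_
      exact hpR.ne ((Nat.prime_dvd_prime_iff_eq (mem_smallPrimes.1 hp).1 hRprime).1 hdvd)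
    · obtain ⟨R', rfl⟩ := hqR
      have hqR' : q.Coprime R' := Nat.coprime_of_squarefree_mul hsq
      have hR' := card_primeFactors_prime_mul hl.head_prime hqR'
      rw [Nat.mul_div_cancel_left R' hl.head_prime.pos] at h
      exact ih (hl.tail_of_coprime hqR') (dvd_of_mul_left_dvd hRN) (by lia) (by lia)
        (h (hN.sub_one_dvd hl.head_prime (dvd_of_mul_right_dvd hRN)))
    · exact ih (hl.tail_of_dvd dvd_rfl hqR) hRN hR hk h

theorem mem_of_checkProgression (hN : IsCarmichael (P * R)) (hNB : P * R < B) (hL : 1 < L)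
    (hLN : L ∣ P * R - 1) (hl : PrimesCover l R) (hR : R.primeFactors.card = k) (hk : k ≠ 0)
    (h : checkProgression B T l k P L = true) : P * R ∈ T := by
  have hP : P ≠ 0 := left_ne_zero_of_mul hN.squarefree.ne_zero
  have hPR : P * R ≡ 1 [MOD L] := ((Nat.modEq_iff_dvd' hN.1.le).2 hLN).symm
  obtain ⟨hs, hPs⟩ := invMod_spec hL (Nat.coprime_of_mul_modEq_one R hPR)
  obtain ⟨j, hj, hRj⟩ := exists_eq_add_mul_of_mul_modEq_one hP hs hPs hPR hNB.le
  have hcofactor := checkProgression_iff.1 h j hj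
  rw [← hRj] at hcofactor
  exact mem_of_checkCofactor hN hl (dvd_mul_left R P) hR hk hcofactor

theorem mem_of_checkPrefix (hN : IsCarmichael (P * R)) (hNB : P * R < B) (hL : 1 < L)
    (hLN : L ∣ P * R - 1) (hl : PrimesCover l R) (hR : R.primeFactors.card = k) (hk : 2 ≤ k)
    (h : checkPrefix B T l k P L = true) : P * R ∈ T := by
  induction l generalizing k P L R with
  | nil => exact absurd h Bool.false_ne_true
  | cons q l ih =>
    have hsq : Squarefree R := hN.squarefree.squarefree_of_dvd (dvd_mul_left R P)
    have hpow : q ^ k ≤ R := hR ▸ pow_card_primeFactors_le hsq.ne_zero fun p => hl.head_le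
    obtain ⟨hadjoin, hskip⟩ := checkPrefix_cons.1 h ((Nat.mul_le_mul_left P hpow).trans_lt hNB)
    by_cases hqR : q ∣ R
    · obtain ⟨R', rfl⟩ := hqR
      have hq := hl.head_prime
      have hqR' : q.Coprime R' := Nat.coprime_of_squarefree_mul hsq
      have hR' := card_primeFactors_prime_mul hq hqR'
      have hqN : q - 1 ∣ P * (q * R') - 1 :=
        hN.sub_one_dvd hq (dvd_mul_of_dvd_right (dvd_mul_right q R') P)
      have hL' : 1 < L.lcm (q - 1) := hL.trans_le <|
        Nat.le_of_dvd (Nat.lcm_pos hL.pos (Nat.sub_pos_of_lt hq.one_lt)) (Nat.dvd_lcm_left ..)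
      have hLN' : L.lcm (q - 1) ∣ P * (q * R') - 1 := Nat.lcm_dvd hLN hqN
      have hl' := hl.tail_of_coprime hqR'
      replace hadjoin := hadjoin (coprime_of_dvd_of_dvd_sub_one hN.1.le (dvd_mul_right ..) hqN)
      rw [← mul_assoc] at hN hNB hLN' ⊢
      split_ifs at hadjoin
      · exact mem_of_checkProgression hN hNB hL' hLN' hl' (by lia) (by lia) hadjoin
      · exact ih hN hNB hL' hLN' hl' (by lia) (by lia) hadjoin
    · exact ih hN hNB hL hLN (hl.tail_of_dvd dvd_rfl hqR) hR hk hskip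

end Soundness

/-! ### The Carmichael numbers with eleven prime factors -/

/-- The prime factorizations of the Carmichael numbers below `10 ^ 18` with eleven prime factors. -/
def carmichaelFactorizations : List (List ℕ) := [
  [5, 7, 13, 17, 23, 37, 59, 73, 109, 523, 577],
  [5, 7, 13, 19, 23, 37, 67, 73, 97, 109, 769],
  [5, 7, 17, 19, 23, 37, 53, 73, 79, 89, 233],
  [5, 7, 17, 19, 37, 53, 59, 79, 97, 109, 769],
  [5, 13, 17, 19, 23, 29, 43, 73, 127, 197, 353],
  [5, 13, 19, 23, 29, 37, 67, 73, 89, 97, 463],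
  [7, 11, 13, 17, 19, 31, 37, 41, 61, 181, 3761],
  [7, 11, 13, 17, 19, 31, 37, 41, 101, 181, 1801],
  [7, 11, 13, 17, 19, 31, 37, 41, 181, 541, 641],
  [7, 11, 13, 17, 19, 31, 37, 61, 109, 193, 433],
  [7, 11, 13, 17, 19, 31, 37, 73, 97, 193, 577],
  [7, 11, 13, 17, 19, 37, 41, 61, 101, 151, 1801],
  [7, 11, 13, 17, 19, 37, 41, 61, 181, 271, 401],
  [7, 11, 13, 17, 31, 59, 61, 97, 101, 181, 241],
  [7, 11, 13, 17, 37, 41, 47, 97, 101, 151, 401],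
  [7, 11, 13, 19, 31, 37, 41, 61, 109, 163, 811],
  [7, 11, 13, 19, 31, 37, 47, 73, 97, 241, 271],
  [7, 11, 13, 19, 31, 37, 61, 73, 97, 101, 577],
  [7, 11, 13, 19, 37, 59, 61, 73, 109, 139, 271],
  [7, 11, 17, 19, 31, 37, 41, 53, 157, 181, 313],
  [7, 11, 17, 19, 31, 37, 41, 73, 101, 193, 577],
  [7, 11, 17, 19, 31, 37, 47, 61, 73, 139, 317],
  [7, 11, 17, 19, 31, 37, 53, 61, 181, 193, 257],
  [7, 11, 17, 19, 37, 47, 53, 61, 73, 277, 313],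
  [7, 13, 17, 19, 23, 31, 37, 73, 199, 241, 331],
  [7, 13, 17, 19, 23, 31, 41, 73, 89, 181, 397],
  [7, 13, 17, 19, 23, 37, 41, 61, 89, 97, 199],
  [7, 13, 17, 19, 23, 37, 41, 73, 101, 199, 601],
  [7, 13, 17, 19, 31, 37, 41, 61, 73, 97, 271],
  [7, 13, 17, 19, 31, 37, 41, 61, 97, 199, 577],
  [7, 13, 19, 31, 37, 41, 67, 89, 97, 103, 199],
  [11, 13, 17, 19, 29, 31, 37, 41, 61, 127, 1009],
  [11, 13, 17, 19, 29, 31, 37, 43, 71, 211, 541],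
  [11, 13, 17, 19, 29, 31, 41, 43, 47, 71, 1381],
  [11, 13, 17, 19, 29, 31, 41, 43, 127, 211, 241],
  [11, 13, 17, 19, 29, 37, 41, 43, 61, 151, 181],
  [11, 13, 17, 19, 29, 37, 41, 61, 109, 181, 337],
  [11, 13, 17, 19, 29, 37, 43, 71, 97, 113, 281],
  [11, 13, 17, 19, 29, 41, 61, 71, 97, 113, 211],
  [11, 13, 17, 19, 31, 37, 41, 61, 71, 97, 181],
  [11, 13, 19, 29, 31, 37, 41, 43, 127, 181, 251],
  [11, 13, 19, 29, 31, 37, 41, 61, 113, 127, 241],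
  [11, 13, 19, 29, 31, 41, 43, 97, 101, 127, 151],
  [13, 17, 19, 23, 29, 31, 37, 43, 67, 113, 127],
  [13, 17, 19, 23, 29, 31, 41, 43, 89, 97, 353],
  [13, 17, 19, 23, 29, 31, 43, 61, 67, 71, 97],
  [13, 17, 19, 23, 29, 37, 41, 61, 73, 127, 331],
  [13, 17, 19, 29, 37, 41, 43, 71, 73, 97, 211],
  [13, 17, 23, 31, 37, 41, 43, 61, 67, 89, 109]]

theorem prime_of_mem_carmichaelFactorizations :
    ∀ f ∈ carmichaelFactorizations, ∀ p ∈ f, p.Prime := by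
  simp only [carmichaelFactorizations, List.forall_mem_cons]
  norm_num

theorem carmichaelFactorizations_spec : ∀ f ∈ carmichaelFactorizations,
    f.Nodup ∧ f.length = 11 ∧ f.prod < 10 ^ 18 ∧ ∀ p ∈ f, p - 1 ∣ f.prod - 1 := by
  decide +kernel

theorem nodup_map_prod_carmichaelFactorizations :
    (carmichaelFactorizations.map List.prod).Nodup := by
  decide +kernel

-- Splitting off the first branches of the search bounds the memory of each evaluation.
theorem checkPrefix_three : checkPrefix (10 ^ 18) (carmichaelFactorizations.map List.prod)
    (smallPrimes.drop 1) 10 3 2 = true := by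
  decide +kernel

set_option maxHeartbeats 0 in
-- an exhaustive search, run inside the kernel
theorem checkPrefix_five : checkPrefix (10 ^ 18) (carmichaelFactorizations.map List.prod)
    (smallPrimes.drop 2) 10 5 4 = true := by
  decide +kernel

set_option maxHeartbeats 0 in
-- an exhaustive search, run inside the kernel
theorem checkPrefix_seven : checkPrefix (10 ^ 18) (carmichaelFactorizations.map List.prod)
    (smallPrimes.drop 3) 10 7 6 = true := by
  decide +kernel

set_option maxHeartbeats 0 in
-- an exhaustive search, run inside the kernel
theorem checkPrefix_one : checkPrefix (10 ^ 18) (carmichaelFactorizations.map List.prod)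
    (smallPrimes.drop 3) 11 1 2 = true := by
  decide +kernel

theorem checkPrefix_smallPrimes :
    checkPrefix (10 ^ 18) (carmichaelFactorizations.map List.prod) smallPrimes 11 1 2 = true := by
  have hsmall : smallPrimes = 3 :: 5 :: 7 :: smallPrimes.drop 3 := rfl
  rw [hsmall]
  refine checkPrefix_cons.2 fun _ => ⟨fun _ => ?_, checkPrefix_cons.2 fun _ => ⟨fun _ => ?_,
    checkPrefix_cons.2 fun _ => ⟨fun _ => ?_, checkPrefix_one⟩⟩⟩
  · rw [if_neg (by norm_num)]
    exact checkPrefix_three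
  · rw [if_neg (by norm_num)]
    exact checkPrefix_five
  · rw [if_neg (by norm_num)]
    exact checkPrefix_seven

theorem mem_map_prod_carmichaelFactorizations {N : ℕ} :
    N ∈ carmichaelFactorizations.map List.prod ↔
      N < 10 ^ 18 ∧ IsCarmichael N ∧ N.primeFactors.card = 11 := by
  constructor
  · intro hN
    obtain ⟨f, hf, rfl⟩ := List.mem_map.1 hN
    obtain ⟨hnodup, hlength, hlt, hdvd⟩ := carmichaelFactorizations_spec f hf
    have hprime := prime_of_mem_carmichaelFactorizations f hf
    refine ⟨hlt, isCarmichael_list_prod hprime hnodup (by lia) hdvd, ?_⟩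
    rw [primeFactors_list_prod hprime, List.toFinset_card_of_nodup hnodup, hlength]
  · rintro ⟨hlt, hN, hcard⟩
    have hcover := primesCover_smallPrimes hN.odd
    rw [← one_mul N] at hN hlt ⊢
    exact mem_of_checkPrefix hN hlt one_lt_two (Nat.Odd.sub_odd hN.odd odd_one).two_dvd hcover
      hcard (by lia) checkPrefix_smallPrimes

theorem carmichael_count_eleven_prime_factors :
    {N : ℕ | N < 10 ^ 18 ∧ IsCarmichael N ∧ N.primeFactors.card = 11}.ncard = 49 := by
  have heq : {N : ℕ | N < 10 ^ 18 ∧ IsCarmichael N ∧ N.primeFactors.card = 11} =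
      (carmichaelFactorizations.map List.prod).toFinset := by
    ext N
    rw [Finset.mem_coe, List.mem_toFinset, mem_map_prod_carmichaelFactorizations]
    rfl
  rw [heq, Set.ncard_coe_finset,
    List.toFinset_card_of_nodup nodup_map_prod_carmichaelFactorizations, List.length_map]
  rfl
end

section
/- No Carmichael number N less than 10^17 satisfies φ(N) ∣ N − 1, where φ is Euler's totient function; equivalently, no Carmichael number below 10^17 has integral Lehmer index ℓ(N) = (N-1)/φ(N). -/
/-!
Let `N = k * φ N + 1` be composite. Then `N` is coprime to `φ N`, so `N` is odd and squarefree, and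
no prime factor of `N` is `1` modulo another one. Among the sets of primes with bounded product, the
smallest primes make `N / φ N = ∏ q / (q - 1)` largest; together with a congruence modulo `3`, this
forces `3 ∤ N` and `k = 2` below `10 ^ 17`. The same bound then shows successively that `5`, `7`,
`13`, `17`, `19`, `23` and `37` divide `N`, each of them ruling out the primes congruent to `1`
modulo it, and that `N` has at least `11` prime factors. Hence `N = P * R` with
`P = 5 * 7 * 13 * 17 * 19 * 23 * 37` and `P * R ≡ 1` modulo `2 ^ 5 * φ P`. The least such `R` is
`1200375599`, which makes `N` exceed `10 ^ 17`.
-/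

open Finset
open scoped Nat

section Exchange

variable {ι R : Type*} [DecidableEq ι] [CommSemiring R] [PartialOrder R] [IsOrderedRing R]
  {s t : Finset ι} {f : ι → R} {c : R}

theorem prod_le_prod_of_card_le_of_threshold (hf : ∀ i ∈ t, 0 ≤ f i) (hc₀ : 0 ≤ c) (hc₁ : c ≤ 1)
    (ht : ∀ i ∈ t \ s, f i ≤ c) (hs : ∀ i ∈ s \ t, c ≤ f i) (hcard : #s ≤ #t) :
    ∏ i ∈ t, f i ≤ ∏ i ∈ s, f i := by
  have hsdiff : ∏ i ∈ t \ s, f i ≤ ∏ i ∈ s \ t, f i :=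
    calc ∏ i ∈ t \ s, f i ≤ ∏ _i ∈ t \ s, c := prod_le_prod (fun i hi => hf i (mem_sdiff.1 hi).1) ht
      _ = c ^ #(t \ s) := prod_const c
      _ ≤ c ^ #(s \ t) := pow_le_pow_of_le_one hc₀ hc₁ (card_sdiff_le_card_sdiff_iff.2 hcard)
      _ = ∏ _i ∈ s \ t, c := (prod_const c).symm
      _ ≤ ∏ i ∈ s \ t, f i := prod_le_prod (fun _ _ => hc₀) hs
  rw [← prod_inter_mul_prod_sdiff t s f, ← prod_inter_mul_prod_sdiff s t f, inter_comm t s]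
  exact mul_le_mul_of_nonneg_left hsdiff (prod_nonneg fun i hi => hf i (mem_inter.1 hi).2)

theorem mul_prod_le_prod_of_card_lt_of_threshold (hf : ∀ i ∈ t, 0 ≤ f i) (hc : 1 ≤ c)
    (ht : ∀ i ∈ t \ s, f i ≤ c) (hs : ∀ i ∈ s \ t, c ≤ f i) (hcard : #t < #s) :
    c * ∏ i ∈ t, f i ≤ ∏ i ∈ s, f i := by
  have hc₀ : 0 ≤ c := zero_le_one.trans hc
  have hlt : #(t \ s) + 1 ≤ #(s \ t) := by
    have := card_inter_add_card_sdiff s t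
    have := card_inter_add_card_sdiff t s
    rw [inter_comm t s] at this
    omega
  have hsdiff : c * ∏ i ∈ t \ s, f i ≤ ∏ i ∈ s \ t, f i :=
    calc c * ∏ i ∈ t \ s, f i ≤ c * ∏ _i ∈ t \ s, c :=
          mul_le_mul_of_nonneg_left (prod_le_prod (fun i hi => hf i (mem_sdiff.1 hi).1) ht) hc₀
      _ = c ^ (#(t \ s) + 1) := by rw [prod_const, pow_succ']
      _ ≤ c ^ #(s \ t) := pow_le_pow_right₀ hc hlt
      _ = ∏ _i ∈ s \ t, c := (prod_const c).symm
      _ ≤ ∏ i ∈ s \ t, f i := prod_le_prod (fun _ _ => hc₀) hs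
  rw [← prod_inter_mul_prod_sdiff t s f, ← prod_inter_mul_prod_sdiff s t f, inter_comm t s,
    mul_left_comm]
  exact mul_le_mul_of_nonneg_left hsdiff (prod_nonneg fun i hi => hf i (mem_inter.1 hi).2)

end Exchange

section Totient

variable {N k p : ℕ}

theorem two_pow_card_primeFactors_dvd_totient (hN : Odd N) : 2 ^ #N.primeFactors ∣ φ N := by
  rw [Nat.totient_eq_div_primeFactors_mul, ← prod_const]
  refine Dvd.dvd.mul_left (prod_dvd_prod_of_dvd _ _ fun q hq => ?_) _
  have hodd : Odd q := hN.of_dvd_nat (Nat.dvd_of_mem_primeFactors hq)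
  exact (Nat.Odd.sub_odd hodd odd_one).two_dvd

theorem totient_mul_two_pow_dvd_totient {P : ℕ} (hsq : Squarefree N) (hN : Odd N) (hP : P ∣ N) :
    φ P * 2 ^ (#N.primeFactors - #P.primeFactors) ∣ φ N := by
  obtain ⟨R, rfl⟩ := hP
  have hPR : P.Coprime R := Nat.coprime_of_squarefree_mul hsq
  rw [Nat.totient_mul hPR, hPR.primeFactors_mul, card_union_of_disjoint hPR.disjoint_primeFactors,
    Nat.add_sub_cancel_left]
  exact mul_dvd_mul_left _ (two_pow_card_primeFactors_dvd_totient (Nat.odd_mul.1 hN).2)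

theorem totient_eq_prod_primeFactors_of_squarefree (hN : Squarefree N) :
    φ N = ∏ q ∈ N.primeFactors, (q - 1) := by
  rw [Nat.totient_eq_div_primeFactors_mul, Nat.prod_primeFactors_of_squarefree hN,
    Nat.div_self hN.ne_zero.bot_lt, one_mul]

theorem sub_one_dvd_totient (hp : p.Prime) (hpN : p ∣ N) : p - 1 ∣ φ N :=
  Nat.totient_prime hp ▸ Nat.totient_dvd_of_dvd hpN

theorem coprime_totient_of_mul_totient_add_one_eq (h : k * φ N + 1 = N) : N.Coprime (φ N) := by
  have hcop : (k * φ N + 1).Coprime (φ N) :=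
    (Nat.coprime_mul_right_add_left 1 (φ N) k).2 (Nat.coprime_one_left _)
  rwa [h] at hcop

theorem two_le_of_mul_totient_add_one_eq (h : k * φ N + 1 = N) (hN₁ : 1 < N) (hN : ¬ N.Prime) :
    2 ≤ k := by
  have hk₀ : k ≠ 0 := by rintro rfl; omega
  have hk₁ : k ≠ 1 := by
    rintro rfl
    exact hN ((Nat.totient_eq_iff_prime (by omega)).1 (by omega))
  omega

theorem squarefree_of_coprime_totient (h : N.Coprime (φ N)) : Squarefree N := by
  refine Nat.squarefree_iff_prime_squarefree.2 fun p hp hpp => ?_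
  have hpφ : p ∣ φ N := (Dvd.intro _ (Nat.totient_mul_of_prime_of_dvd hp dvd_rfl).symm).trans
    (Nat.totient_dvd_of_dvd hpp)
  exact Nat.not_coprime_of_dvd_of_dvd hp.one_lt (dvd_of_mul_left_dvd hpp) hpφ h

theorem odd_of_coprime_totient (hN : 2 < N) (h : N.Coprime (φ N)) : Odd N :=
  Nat.coprime_two_right.1 (h.coprime_dvd_right (Nat.totient_even hN).two_dvd)

theorem totient_modEq_two_of_three_dvd (h : N.Coprime (φ N)) (h3 : 3 ∣ N) : φ N ≡ 2 [MOD 3] := by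
  have hsq := squarefree_of_coprime_totient h
  have hmem : 3 ∈ N.primeFactors := Nat.prime_three.mem_primeFactors h3 hsq.ne_zero
  have hone : ∀ q ∈ N.primeFactors.erase 3, q - 1 ≡ 1 [MOD 3] := by
    intro q hq
    obtain ⟨hq3, hqN⟩ := mem_erase.1 hq
    have hqp := Nat.prime_of_mem_primeFactors hqN
    have hpos := hqp.pos
    have hmod_zero : ¬ 3 ∣ q := fun hd =>
      hq3 ((Nat.prime_dvd_prime_iff_eq Nat.prime_three hqp).1 hd).symm
    have hmod_one : ¬ 3 ∣ q - 1 := fun hd => Nat.not_coprime_of_dvd_of_dvd (by norm_num) h3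
      (hd.trans (sub_one_dvd_totient hqp (Nat.dvd_of_mem_primeFactors hqN))) h
    simp only [Nat.ModEq]
    omega
  rw [totient_eq_prod_primeFactors_of_squarefree hsq, ← mul_prod_erase _ _ hmem]
  simpa using (Nat.ModEq.refl 2).mul (Nat.ModEq.prod hone)

end Totient

/-- The primes `q < b` coprime to `m` such that `q - 1` is coprime to `P`. If `N` is coprime to
`φ N` and to `m` and is divisible by `P`, every prime factor of `N` below `b` is one of them. -/
def admissiblePrimes (m P b : ℕ) : Finset ℕ :=
  {q ∈ range b | q.Prime ∧ q.Coprime m ∧ (q - 1).Coprime P}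

section Admissible

variable {N m P b k p : ℕ}

theorem lt_of_mem_admissiblePrimes {q : ℕ} (hq : q ∈ admissiblePrimes m P b) : q < b :=
  mem_range.1 (mem_filter.1 hq).1

theorem prime_of_mem_admissiblePrimes {q : ℕ} (hq : q ∈ admissiblePrimes m P b) : q.Prime :=
  (mem_filter.1 hq).2.1

theorem le_of_mem_primeFactors_sdiff_admissiblePrimes (h : N.Coprime (φ N)) (hm : N.Coprime m)
    (hP : P ∣ N) {q : ℕ} (hq : q ∈ N.primeFactors \ admissiblePrimes m P b) : b ≤ q := by
  obtain ⟨hqN, hqt⟩ := mem_sdiff.1 hq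
  have hqp := Nat.prime_of_mem_primeFactors hqN
  have hdvd := Nat.dvd_of_mem_primeFactors hqN
  by_contra! hlt
  exact hqt (mem_filter.2 ⟨mem_range.2 hlt, hqp, hm.coprime_dvd_left hdvd,
    (h.coprime_dvd_left hP).symm.coprime_dvd_left (sub_one_dvd_totient hqp hdvd)⟩)

theorem card_primeFactors_le_card_admissiblePrimes (h : N.Coprime (φ N)) (hm : N.Coprime m)
    (hP : P ∣ N) (hN₀ : 0 < N) (hN : N < b * ∏ q ∈ admissiblePrimes m P b, q) :
    #N.primeFactors ≤ #(admissiblePrimes m P b) := by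
  by_contra! hlt
  have hb : 0 < b := Nat.pos_of_mul_pos_right (hN₀.trans hN)
  have hprod : b * ∏ q ∈ admissiblePrimes m P b, q ≤ ∏ q ∈ N.primeFactors, q :=
    mul_prod_le_prod_of_card_lt_of_threshold (fun _ _ => Nat.zero_le _) hb
      (fun q hq => (lt_of_mem_admissiblePrimes (mem_sdiff.1 hq).1).le)
      (fun q hq => le_of_mem_primeFactors_sdiff_admissiblePrimes h hm hP hq) hlt
  have hrad : ∏ q ∈ N.primeFactors, q ≤ N := Nat.le_of_dvd hN₀ (Nat.prod_primeFactors_dvd N)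
  omega

theorem cast_prod_admissiblePrimes_sub_one :
    ((∏ q ∈ admissiblePrimes m P b, (q - 1) : ℕ) : ℚ) =
      (∏ q ∈ admissiblePrimes m P b, q : ℕ) * ∏ q ∈ admissiblePrimes m P b, (1 - (q : ℚ)⁻¹) := by
  push_cast
  rw [← prod_mul_distrib]
  refine prod_congr rfl fun q hq => ?_
  have hpos : 0 < q := (prime_of_mem_admissiblePrimes hq).pos
  rw [Nat.cast_pred hpos]
  field_simp

theorem le_mul_totient_of_card_primeFactors_le (h : N.Coprime (φ N)) (hm : N.Coprime m)
    (hP : P ∣ N) (hb : 0 < b) (hcard : #N.primeFactors ≤ #(admissiblePrimes m P b))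
    (hk : ∏ q ∈ admissiblePrimes m P b, q ≤ k * ∏ q ∈ admissiblePrimes m P b, (q - 1)) :
    N ≤ k * φ N := by
  set t := admissiblePrimes m P b
  have hexchange : ∏ q ∈ t, (1 - (q : ℚ)⁻¹) ≤ ∏ q ∈ N.primeFactors, (1 - (q : ℚ)⁻¹) := by
    refine prod_le_prod_of_card_le_of_threshold (c := 1 - (b : ℚ)⁻¹)
      (fun q _ => sub_nonneg.2 (Nat.cast_inv_le_one q)) (sub_nonneg.2 (Nat.cast_inv_le_one b))
      (sub_le_self _ (by positivity)) (fun q hq => ?_) (fun q hq => ?_) hcard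
    · have hqt := (mem_sdiff.1 hq).1
      have hpos : 0 < q := (prime_of_mem_admissiblePrimes hqt).pos
      have hle : q ≤ b := (lt_of_mem_admissiblePrimes hqt).le
      gcongr
    · have hle : b ≤ q := le_of_mem_primeFactors_sdiff_admissiblePrimes h hm hP hq
      gcongr
  have hpos : (0 : ℚ) < (∏ q ∈ t, q : ℕ) :=
    Nat.cast_pos.2 (prod_pos fun q hq => (prime_of_mem_admissiblePrimes hq).pos)
  have hone : 1 ≤ k * ∏ q ∈ t, (1 - (q : ℚ)⁻¹) := by
    have hk' : ((∏ q ∈ t, q : ℕ) : ℚ) ≤ k * (∏ q ∈ t, (q - 1) : ℕ) := by exact_mod_cast hk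
    rw [cast_prod_admissiblePrimes_sub_one, mul_left_comm] at hk'
    exact (le_mul_iff_one_le_right hpos).1 hk'
  have hcast : (N : ℚ) ≤ k * φ N :=
    calc (N : ℚ) ≤ N * (k * ∏ q ∈ t, (1 - (q : ℚ)⁻¹)) := le_mul_of_one_le_right N.cast_nonneg hone
      _ ≤ N * (k * ∏ q ∈ N.primeFactors, (1 - (q : ℚ)⁻¹)) := by gcongr
      _ = k * φ N := by rw [Nat.totient_eq_mul_prod_factors, mul_left_comm]
  exact_mod_cast hcast

theorem le_mul_totient_of_lt_mul_prod_admissiblePrimes (h : N.Coprime (φ N))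
    (hm : N.Coprime m) (hP : P ∣ N) (hN : N < b * ∏ q ∈ admissiblePrimes m P b, q)
    (hk : ∏ q ∈ admissiblePrimes m P b, q ≤ k * ∏ q ∈ admissiblePrimes m P b, (q - 1)) :
    N ≤ k * φ N := by
  rcases N.eq_zero_or_pos with rfl | hN₀
  · exact Nat.zero_le _
  · exact le_mul_totient_of_card_primeFactors_le h hm hP (Nat.pos_of_mul_pos_right (hN₀.trans hN))
      (card_primeFactors_le_card_admissiblePrimes h hm hP hN₀ hN) hk

theorem mul_dvd_of_lt_mul_prod_admissiblePrimes (h : N.Coprime (φ N))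
    (hm : N.Coprime m) (hP : P ∣ N) (hlt : k * φ N < N) (hp : p.Prime) (hPp : P.Coprime p)
    (hN : N < b * ∏ q ∈ admissiblePrimes (m * p) P b, q)
    (hk : ∏ q ∈ admissiblePrimes (m * p) P b, q ≤
      k * ∏ q ∈ admissiblePrimes (m * p) P b, (q - 1)) :
    P * p ∣ N := by
  refine hPp.mul_dvd_of_dvd_of_dvd hP ?_
  by_contra hpN
  have hNp : N.Coprime p := ((Nat.Prime.coprime_iff_not_dvd hp).2 hpN).symm
  exact hlt.not_ge (le_mul_totient_of_lt_mul_prod_admissiblePrimes h (hm.mul_right hNp) hP hN hk)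

end Admissible

section Bounded

variable {N k : ℕ}

theorem eq_two_and_coprime_six_of_mul_totient_add_one_eq (h : k * φ N + 1 = N) (hk : 2 ≤ k)
    (hN : N < 10 ^ 17) : k = 2 ∧ N.Coprime 6 := by
  have hcop := coprime_totient_of_mul_totient_add_one_eq h
  have hφ : 0 < φ N := Nat.totient_pos.2 (by omega)
  have index_lt {j : ℕ} (hj : N ≤ j * φ N) : k < j := by
    rw [← Nat.mul_lt_mul_right hφ]
    omega
  have hN₂ : N.Coprime 2 := Nat.coprime_two_right.2 (odd_of_coprime_totient (by nlinarith) hcop)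
  have hk₄ : k < 4 := index_lt <|
    le_mul_totient_of_lt_mul_prod_admissiblePrimes (b := 47) hcop hN₂ (one_dvd N)
      (hN.trans_le (by decide +kernel)) (by decide +kernel)
  have h3 : ¬ 3 ∣ N := fun h3 => by
    have hmod : φ N % 3 = 2 := totient_modEq_two_of_three_dvd hcop h3
    interval_cases k <;> omega
  have hN₆ : N.Coprime 6 :=
    hN₂.mul_right ((Nat.Prime.coprime_iff_not_dvd Nat.prime_three).2 h3).symm
  have hk₃ : k < 3 := index_lt <|
    le_mul_totient_of_lt_mul_prod_admissiblePrimes (b := 47) hcop hN₆ (one_dvd N)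
      (hN.trans_le (by decide +kernel)) (by decide +kernel)
  exact ⟨by omega, hN₆⟩

theorem prod_dvd_of_two_mul_totient_add_one_eq (h : 2 * φ N + 1 = N) (h6 : N.Coprime 6)
    (hN : N < 10 ^ 17) : 5 * 7 * 13 * 17 * 19 * 23 * 37 ∣ N := by
  have mul_prime_dvd (p b : ℕ) {P : ℕ} (hP : P ∣ N) (hp : p.Prime) (hPp : P.Coprime p)
      (hb : 10 ^ 17 ≤ b * ∏ q ∈ admissiblePrimes (6 * p) P b, q)
      (hk : ∏ q ∈ admissiblePrimes (6 * p) P b, q ≤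
        2 * ∏ q ∈ admissiblePrimes (6 * p) P b, (q - 1)) : P * p ∣ N :=
    mul_dvd_of_lt_mul_prod_admissiblePrimes (coprime_totient_of_mul_totient_add_one_eq h) h6 hP
      (by omega) hp hPp (hN.trans_le hb) hk
  -- Each cutoff is the first admissible prime that takes the product past `10 ^ 17`.
  have h5 : 5 ∣ N := by
    simpa using mul_prime_dvd 5 53 (one_dvd N) (by norm_num) (by norm_num) (by decide +kernel)
      (by decide +kernel)
  have h7 := mul_prime_dvd 7 67 h5 (by norm_num) (by norm_num) (by decide +kernel)
    (by decide +kernel)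
  have h13 := mul_prime_dvd 13 79 h7 (by norm_num) (by norm_num) (by decide +kernel)
    (by decide +kernel)
  have h17 := mul_prime_dvd 17 89 h13 (by norm_num) (by norm_num) (by decide +kernel)
    (by decide +kernel)
  have h19 := mul_prime_dvd 19 89 h17 (by norm_num) (by norm_num) (by decide +kernel)
    (by decide +kernel)
  have h23 := mul_prime_dvd 23 89 h19 (by norm_num) (by norm_num) (by decide +kernel)
    (by decide +kernel)
  exact mul_prime_dvd 37 97 h23 (by norm_num) (by norm_num) (by decide +kernel)
    (by decide +kernel)

theorem eleven_le_card_primeFactors (h : 2 * φ N + 1 = N) (h6 : N.Coprime 6)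
    (hP : 5 * 7 * 13 * 17 * 19 * 23 * 37 ∣ N) : 11 ≤ #N.primeFactors := by
  by_contra! hlt
  have hcard : #(admissiblePrimes 6 (5 * 7 * 13 * 17 * 19 * 23 * 37) 74) = 10 := by decide +kernel
  have hle : N ≤ 2 * φ N :=
    le_mul_totient_of_card_primeFactors_le (coprime_totient_of_mul_totient_add_one_eq h) h6 hP
      (b := 74) (by norm_num) (hcard ▸ Nat.le_of_lt_succ hlt) (by decide +kernel)
  exact (Nat.lt_of_succ_le h.le).not_ge hle

theorem totient_mul_two_pow_four_dvd_totient (h : 2 * φ N + 1 = N) (h6 : N.Coprime 6)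
    (hP : 5 * 7 * 13 * 17 * 19 * 23 * 37 ∣ N) :
    φ (5 * 7 * 13 * 17 * 19 * 23 * 37) * 2 ^ 4 ∣ φ N := by
  have hωP : #(Nat.primeFactors (5 * 7 * 13 * 17 * 19 * 23 * 37)) = 7 := by decide +kernel
  have hdvd := totient_mul_two_pow_dvd_totient
    (squarefree_of_coprime_totient (coprime_totient_of_mul_totient_add_one_eq h))
    ⟨φ N, h.symm⟩ hP
  rw [hωP] at hdvd
  have hω : 4 ≤ #N.primeFactors - 7 := Nat.sub_le_sub_right (eleven_le_card_primeFactors h h6 hP) 7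
  exact (mul_dvd_mul_left _ (pow_dvd_pow 2 hω)).trans hdvd

theorem ten_pow_le_of_two_mul_totient_add_one_eq (h : 2 * φ N + 1 = N) (h6 : N.Coprime 6) :
    10 ^ 17 ≤ N := by
  by_contra! hN
  have hP := prod_dvd_of_two_mul_totient_add_one_eq h h6 hN
  have hφP : φ (5 * 7 * 13 * 17 * 19 * 23 * 37) = 65691648 := by
    rw [Nat.totient_eq_div_primeFactors_mul]
    decide +kernel
  have hφN := totient_mul_two_pow_four_dvd_totient h h6 hP
  rw [hφP] at hφN
  have hN₁ : N ≡ 1 [MOD 2 * (65691648 * 2 ^ 4)] := by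
    nth_rw 1 [← h]
    exact (Nat.modEq_zero_iff_dvd.2 (mul_dvd_mul_left 2 hφN)).add_right 1
  obtain ⟨R, rfl⟩ := hP
  have hinv : 5 * 7 * 13 * 17 * 19 * 23 * 37 * 1200375599 ≡ 1 [MOD 2 * (65691648 * 2 ^ 4)] := by
    decide +kernel
  have hR : 1200375599 ≡ R [MOD 2 * (65691648 * 2 ^ 4)] :=
    (hinv.trans hN₁.symm).cancel_left_of_coprime (by decide +kernel)
  have hle : 1200375599 ≤ R := hR.le_of_lt_add (Nat.lt_add_left R (by norm_num))
  exact hN.not_ge (le_trans (by norm_num) (Nat.mul_le_mul_left _ hle))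

end Bounded

theorem carmichael_no_lehmer_general {N : ℕ} (hN₁ : 1 < N) (hNp : ¬ N.Prime) (hN : N < 10 ^ 17) :
    ¬ φ N ∣ N - 1 := by
  rintro ⟨k, hk⟩
  have h : k * φ N + 1 = N := by rw [mul_comm]; omega
  have hk₂ := two_le_of_mul_totient_add_one_eq h hN₁ hNp
  obtain ⟨rfl, h6⟩ := eq_two_and_coprime_six_of_mul_totient_add_one_eq h hk₂ hN
  exact hN.not_ge (ten_pow_le_of_two_mul_totient_add_one_eq h h6)

theorem carmichael_no_lehmer :
    ∀ N : ℕ, IsCarmichael N → N < 10 ^ 17 → ¬ (N.totient ∣ N - 1) :=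
  fun _ ⟨hN₁, hNp, _⟩ hN => carmichael_no_lehmer_general hN₁ hNp hN
end
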